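/- Let C₁, C₂ be algebraic curves in ℂP² of degrees m₁, m₂ defined by coprime homogeneous polynomials. Then Σ_Q I_Q(C₁, C₂) = m₁·m₂, where the sum runs over the (finitely many) intersection points Q ∈ C₁ ∩ C₂ and I_Q denotes the local intersection multiplicity (Bézout's theorem). -/

import Mathlib

set_option synthInstance.maxHeartbeats 2000000
set_option maxHeartbeats 2000000

open MvPolynomial

noncomputable section

/-- The fraction field of `ℂ[X,Y,Z]`. -/
def K3 : Type := FractionRing (MvPolynomial (Fin 3) ℂ)

instance : Field K3 :=
  inferInstanceAs (Field (FractionRing (MvPolynomial (Fin 3) ℂ)))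

instance : Algebra ℂ K3 :=
  inferInstanceAs (Algebra ℂ (FractionRing (MvPolynomial (Fin 3) ℂ)))

instance : Algebra (MvPolynomial (Fin 3) ℂ) K3 :=
  inferInstanceAs
    (Algebra (MvPolynomial (Fin 3) ℂ) (FractionRing (MvPolynomial (Fin 3) ℂ)))

/-- The local ring of `ℂP²` at the point with homogeneous coordinate vector `v ≠ 0`:
degree-zero fractions `G/H` of homogeneous polynomials of the same degree with `H(v) ≠ 0`,
inside the fraction field of `ℂ[X,Y,Z]`. -/
def projLocalRing (v : Fin 3 → ℂ) : Subalgebra ℂ K3 :=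
  Algebra.adjoin ℂ
    {x | ∃ (G H : MvPolynomial (Fin 3) ℂ) (e : ℕ),
      G.IsHomogeneous e ∧ H.IsHomogeneous e ∧ eval v H ≠ 0 ∧
      x * algebraMap (MvPolynomial (Fin 3) ℂ) K3 H
        = algebraMap (MvPolynomial (Fin 3) ℂ) K3 G}

/-- The ideal of the local ring of `ℂP²` at `v` generated by local equations of the two
curves `F₁ = 0` and `F₂ = 0` (i.e. by the degree-zero fractions `F₁/H`, `F₂/H` with `H`
homogeneous and `H(v) ≠ 0`). -/
def interIdeal (F₁ F₂ : MvPolynomial (Fin 3) ℂ) (v : Fin 3 → ℂ) :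
    Ideal (projLocalRing v) :=
  Ideal.span
    {y | ∃ (H : MvPolynomial (Fin 3) ℂ) (e : ℕ), H.IsHomogeneous e ∧ eval v H ≠ 0 ∧
      ((y : K3) * algebraMap (MvPolynomial (Fin 3) ℂ) K3 H
          = algebraMap (MvPolynomial (Fin 3) ℂ) K3 F₁ ∨
       (y : K3) * algebraMap (MvPolynomial (Fin 3) ℂ) K3 H
          = algebraMap (MvPolynomial (Fin 3) ℂ) K3 F₂)}

/-- The local intersection multiplicity `I_Q(C₁, C₂)` of the curves `F₁ = 0`, `F₂ = 0` at the
projective point with homogeneous coordinates `v`: the `ℂ`-dimension of the quotient of the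
local ring of `ℂP²` at `v` by the ideal generated by local equations of the two curves. -/
def interMult (F₁ F₂ : MvPolynomial (Fin 3) ℂ) (v : Fin 3 → ℂ) : ℕ :=
  Module.finrank ℂ (projLocalRing v ⧸ interIdeal F₁ F₂ v)

/-!
Let `I = (F₁, F₂)`. Since `F₁` and `F₂` are coprime, the Koszul complex `0 → S → S² → S → S / I → 0`
of `S = ℂ[X, Y, Z]` is exact, so the degree `d` part of `S / I` has dimension `m₁ * m₂` as soon as
`m₁ + m₂ ≤ d`. Forms of large degree separate any finite set of points, so the curves meet in at
most `m₁ * m₂` points and some linear form `L` vanishes at none of them. By the Nullstellensatz,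
`(I, L)` contains all forms of large degree. Multiplication by `L` is therefore surjective, hence
bijective, between the large degree parts of `S / I`, whence `dim S / (I, L - 1) = m₁ * m₂`. This
Artinian ring is the product of its localizations at the intersection points, and its localization
at `Q` is the local ring of `ℂP²` at `Q` modulo local equations of the two curves.
-/

namespace Bezout

attribute [local instance] MvPolynomial.gradedAlgebra

section Grading

variable {σ R : Type*} [CommRing R]

theorem homogeneousComponent_mul_of_isHomogeneous {F : MvPolynomial σ R} {m : ℕ}
    (hF : F.IsHomogeneous m) (a : MvPolynomial σ R) (n : ℕ) :
    homogeneousComponent (n + m) (a * F) = homogeneousComponent n a * F := by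
  rw [← decomposition.decompose'_apply, ← decomposition.decompose'_apply]
  exact DirectSum.coe_decompose_mul_add_of_right_mem (homogeneousSubmodule σ R)
    ((mem_homogeneousSubmodule m F).2 hF)

theorem isHomogeneous_of_mul_right [IsDomain R] {F c : MvPolynomial σ R} {m n : ℕ}
    (hF : F.IsHomogeneous m) (hF0 : F ≠ 0) (hcF : (c * F).IsHomogeneous (n + m)) :
    c.IsHomogeneous n := by
  have hc := homogeneousComponent_mul_of_isHomogeneous hF c n
  rw [homogeneousComponent_eq_self hcF] at hc
  exact mul_right_cancel₀ hF0 hc ▸ homogeneousComponent_isHomogeneous n c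

theorem isHomogeneous_span_pair {F₁ F₂ : MvPolynomial σ R} {m₁ m₂ : ℕ}
    (h₁ : F₁.IsHomogeneous m₁) (h₂ : F₂.IsHomogeneous m₂) :
    (Ideal.span {F₁, F₂}).IsHomogeneous (homogeneousSubmodule σ R) := by
  refine Ideal.homogeneous_span _ _ ?_
  rintro _ (rfl | rfl)
  exacts [⟨m₁, h₁⟩, ⟨m₂, h₂⟩]

theorem exists_isHomogeneous_of_mem_span_pair {F₁ F₂ G : MvPolynomial σ R} {m₁ m₂ d₁ d₂ d : ℕ}
    (h₁ : F₁.IsHomogeneous m₁) (h₂ : F₂.IsHomogeneous m₂) (hG : G.IsHomogeneous d)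
    (hd₁ : d₁ + m₁ = d) (hd₂ : d₂ + m₂ = d) (hmem : G ∈ Ideal.span {F₁, F₂}) :
    ∃ a b : MvPolynomial σ R, a.IsHomogeneous d₁ ∧ b.IsHomogeneous d₂ ∧ a * F₁ + b * F₂ = G := by
  obtain ⟨a, b, hab⟩ := Ideal.mem_span_pair.1 hmem
  refine ⟨homogeneousComponent d₁ a, homogeneousComponent d₂ b,
    homogeneousComponent_isHomogeneous _ _, homogeneousComponent_isHomogeneous _ _, ?_⟩
  rw [← homogeneousComponent_mul_of_isHomogeneous h₁,
    ← homogeneousComponent_mul_of_isHomogeneous h₂, hd₁, hd₂, ← map_add, hab,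
    homogeneousComponent_eq_self hG]

/-- Multiplication by a form `F` of degree `m`, as a linear map from forms of degree `n` to forms
of degree `l = n + m`. -/
def mulForm {F : MvPolynomial σ R} {m n l : ℕ} (hF : F.IsHomogeneous m) (h : n + m = l) :
    homogeneousSubmodule σ R n →ₗ[R] homogeneousSubmodule σ R l :=
  (LinearMap.mulRight R F).restrict fun _ hx => h ▸ IsHomogeneous.mul hx hF

/-- The degree `d` part of the ideal `I`, as a subspace of the space of forms of degree `d`. -/
def gradedPart (I : Ideal (MvPolynomial σ R)) (d : ℕ) :
    Submodule R (homogeneousSubmodule σ R d) :=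
  (I.restrictScalars R).comap (homogeneousSubmodule σ R d).subtype

theorem mem_gradedPart {I : Ideal (MvPolynomial σ R)} {d : ℕ} {x : homogeneousSubmodule σ R d} :
    x ∈ gradedPart I d ↔ (x : MvPolynomial σ R) ∈ I :=
  Iff.rfl

/-- The Hilbert function of the ring `R[σ] / I`: the dimension of its degree `d` part. -/
def hilbertFunction (I : Ideal (MvPolynomial σ R)) (d : ℕ) : ℕ :=
  Module.finrank R (homogeneousSubmodule σ R d ⧸ gradedPart I d)

end Grading

section HilbertFunction

variable {σ k : Type*} [Field k]

instance [Finite σ] (d : ℕ) : Module.Finite k (homogeneousSubmodule σ k d) :=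
  Module.Finite.iff_fg.2 (homogeneousSubmodule_fg σ k d)

theorem finrank_homogeneousSubmodule (n d : ℕ) :
    Module.finrank k (homogeneousSubmodule (Fin (n + 1)) k d) = (d + n).choose n := by
  have hsupp : {f : Fin (n + 1) →₀ ℕ | f.degree = d} =
      ((Finset.univ : Finset (Fin (n + 1))).finsuppAntidiag d : Set (Fin (n + 1) →₀ ℕ)) := by
    ext f
    simp [Finset.mem_finsuppAntidiag, Finsupp.degree_eq_sum]
  rw [homogeneousSubmodule_eq_finsupp_supported, hsupp,
    (AddMonoidAlgebra.supportedEquivFinsupp _).finrank_eq]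
  simp only [Finset.coe_sort_coe, Module.finrank_finsupp_self, Fintype.card_coe,
    Finset.card_finsuppAntidiag_nat_eq_choose, Finset.card_univ, Fintype.card_fin]
  rw [show n + 1 + d - 1 = d + n by omega]
  exact Nat.choose_symm_add

variable {F₁ F₂ : MvPolynomial σ k} {m₁ m₂ : ℕ}

/-- The map `(a, b) ↦ a F₁ + b F₂` of the Koszul complex of two forms, in a fixed degree. -/
def koszulSum (h₁ : F₁.IsHomogeneous m₁) (h₂ : F₂.IsHomogeneous m₂) (e : ℕ) :
    homogeneousSubmodule σ k (e + m₂) × homogeneousSubmodule σ k (e + m₁) →ₗ[k]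
      homogeneousSubmodule σ k (e + m₁ + m₂) :=
  (mulForm h₁ (add_right_comm e m₂ m₁)).coprod (mulForm h₂ rfl)

/-- The map `c ↦ (c F₂, -c F₁)` of the Koszul complex of two forms, in a fixed degree. -/
def koszulSyzygy (h₁ : F₁.IsHomogeneous m₁) (h₂ : F₂.IsHomogeneous m₂) (e : ℕ) :
    homogeneousSubmodule σ k e →ₗ[k]
      homogeneousSubmodule σ k (e + m₂) × homogeneousSubmodule σ k (e + m₁) :=
  (mulForm h₂ rfl).prod (-mulForm h₁ rfl)

theorem range_koszulSum (h₁ : F₁.IsHomogeneous m₁) (h₂ : F₂.IsHomogeneous m₂) (e : ℕ) :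
    LinearMap.range (koszulSum h₁ h₂ e) = gradedPart (Ideal.span {F₁, F₂}) (e + m₁ + m₂) := by
  ext x
  rw [mem_gradedPart]
  constructor
  · rintro ⟨⟨a, b⟩, rfl⟩
    exact Ideal.mem_span_pair.2 ⟨a, b, rfl⟩
  · intro hx
    obtain ⟨a, b, ha, hb, hab⟩ :=
      exists_isHomogeneous_of_mem_span_pair h₁ h₂ x.2 (add_right_comm e m₂ m₁) rfl hx
    exact ⟨(⟨a, ha⟩, ⟨b, hb⟩), Subtype.ext hab⟩

theorem koszulSyzygy_injective (h₁ : F₁.IsHomogeneous m₁) (h₂ : F₂.IsHomogeneous m₂)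
    (hF₂ : F₂ ≠ 0) (e : ℕ) : Function.Injective (koszulSyzygy h₁ h₂ e) := fun _ _ hxy =>
  Subtype.ext (mul_right_cancel₀ hF₂ (congrArg (fun p => (p.1 : MvPolynomial σ k)) hxy))

theorem range_koszulSyzygy (h₁ : F₁.IsHomogeneous m₁) (h₂ : F₂.IsHomogeneous m₂)
    (hF₂ : F₂ ≠ 0) (hcop : IsRelPrime F₁ F₂) (e : ℕ) :
    LinearMap.range (koszulSyzygy h₁ h₂ e) = LinearMap.ker (koszulSum h₁ h₂ e) := by
  ext ⟨⟨a, ha⟩, ⟨b, hb⟩⟩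
  rw [LinearMap.mem_ker]
  constructor
  · rintro ⟨c, hc⟩
    rw [← hc]
    refine Subtype.ext ?_
    change (c : MvPolynomial σ k) * F₂ * F₁ + -(c * F₁) * F₂ = 0
    ring
  · intro hab
    replace hab : a * F₁ + b * F₂ = 0 := congrArg Subtype.val hab
    obtain ⟨c, rfl⟩ : F₂ ∣ a :=
      hcop.symm.dvd_of_dvd_mul_right ⟨-b, by linear_combination hab⟩
    have hc : c.IsHomogeneous e := isHomogeneous_of_mul_right h₂ hF₂ (mul_comm F₂ c ▸ ha)
    have hb' : -(c * F₁) = b := mul_right_cancel₀ hF₂ (by linear_combination -hab)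
    exact ⟨⟨c, hc⟩, Prod.ext (Subtype.ext (mul_comm c F₂)) (Subtype.ext hb')⟩

theorem hilbertFunction_span_pair_add [Finite σ] (h₁ : F₁.IsHomogeneous m₁)
    (h₂ : F₂.IsHomogeneous m₂) (hF₂ : F₂ ≠ 0) (hcop : IsRelPrime F₁ F₂) (e : ℕ) :
    hilbertFunction (Ideal.span {F₁, F₂}) (e + m₁ + m₂) +
        (Module.finrank k (homogeneousSubmodule σ k (e + m₁)) +
          Module.finrank k (homogeneousSubmodule σ k (e + m₂))) =
      Module.finrank k (homogeneousSubmodule σ k (e + m₁ + m₂)) +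
        Module.finrank k (homogeneousSubmodule σ k e) := by
  have hsum := LinearMap.finrank_range_add_finrank_ker (koszulSum h₁ h₂ e)
  have hsyz := LinearMap.finrank_range_of_inj (koszulSyzygy_injective h₁ h₂ hF₂ e)
  have hquot := Submodule.finrank_quotient_add_finrank
    (gradedPart (Ideal.span {F₁, F₂}) (e + m₁ + m₂))
  rw [range_koszulSum, ← range_koszulSyzygy h₁ h₂ hF₂ hcop, hsyz, Module.finrank_prod] at hsum
  rw [hilbertFunction]
  omega

theorem hilbertFunction_span_pair {F₁ F₂ : MvPolynomial (Fin 3) k} (h₁ : F₁.IsHomogeneous m₁)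
    (h₂ : F₂.IsHomogeneous m₂) (hF₂ : F₂ ≠ 0) (hcop : IsRelPrime F₁ F₂) {d : ℕ}
    (hd : m₁ + m₂ ≤ d) : hilbertFunction (Ideal.span {F₁, F₂}) d = m₁ * m₂ := by
  obtain ⟨e, rfl⟩ := Nat.exists_eq_add_of_le' hd
  have hcount := hilbertFunction_span_pair_add h₁ h₂ hF₂ hcop e
  simp only [finrank_homogeneousSubmodule 2] at hcount
  have two_mul_choose (n : ℕ) : 2 * (n + 2).choose 2 = (n + 2) * (n + 1) := by
    have := Nat.add_one_mul_choose_eq (n + 1) 1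
    rw [Nat.choose_one_right] at this
    linarith
  rw [← add_assoc]
  nlinarith [two_mul_choose e, two_mul_choose (e + m₁), two_mul_choose (e + m₂),
    two_mul_choose (e + m₁ + m₂)]

end HilbertFunction

section Dehomogenization

variable {σ R : Type*} [CommRing R] {L : MvPolynomial σ R}

theorem mul_pow_sub_self_mem_span_sub_one (L g : MvPolynomial σ R) (n : ℕ) :
    g * L ^ n - g ∈ Ideal.span {L - 1} := by
  have hdvd := (sub_dvd_pow_sub_pow L 1 n).mul_left g
  rwa [one_pow, mul_sub, mul_one, ← Ideal.mem_span_singleton] at hdvd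

/-- The form `∑ i ≤ N, gᵢ L ^ (N - i)` of degree `N`, where `gᵢ` is the degree `i` component of `g`
and `L` is a linear form. It agrees with `g` on the affine chart `L = 1` if `g` has degree at most
`N`; higher components of `g` are discarded. -/
def homogenize (L : MvPolynomial σ R) (N : ℕ) : MvPolynomial σ R →ₗ[R] MvPolynomial σ R :=
  ∑ i ∈ Finset.range (N + 1), LinearMap.mulRight R (L ^ (N - i)) ∘ₗ homogeneousComponent i

theorem homogenize_apply (L : MvPolynomial σ R) (N : ℕ) (g : MvPolynomial σ R) :
    homogenize L N g = ∑ i ∈ Finset.range (N + 1), homogeneousComponent i g * L ^ (N - i) := by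
  simp [homogenize]

theorem isHomogeneous_homogenize (hL : L.IsHomogeneous 1) (N : ℕ) (g : MvPolynomial σ R) :
    (homogenize L N g).IsHomogeneous N := by
  rw [homogenize_apply]
  refine IsHomogeneous.sum _ _ _ fun i hi => ?_
  have hiN := Finset.mem_range.1 hi
  convert (homogeneousComponent_isHomogeneous i g).mul (hL.pow (N - i)) using 1
  omega

theorem homogenize_of_isHomogeneous (L : MvPolynomial σ R) {G : MvPolynomial σ R} {e N : ℕ}
    (hG : G.IsHomogeneous e) (heN : e ≤ N) : homogenize L N G = G * L ^ (N - e) := by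
  rw [homogenize_apply, Finset.sum_eq_single_of_mem e (Finset.mem_range.2 (by omega)),
    homogeneousComponent_eq_self hG]
  intro i _ hie
  rw [homogeneousComponent_of_mem ((mem_homogeneousSubmodule _ _).2 hG), if_neg hie, zero_mul]

theorem sum_homogeneousComponent_of_totalDegree_lt {g : MvPolynomial σ R} {n : ℕ}
    (hn : g.totalDegree < n) : ∑ i ∈ Finset.range n, homogeneousComponent i g = g := by
  conv_rhs => rw [← sum_homogeneousComponent g]
  refine (Finset.sum_subset (Finset.range_subset_range.2 hn) fun i _ hi => ?_).symm
  exact homogeneousComponent_eq_zero _ _ (by simpa using hi)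

theorem homogenize_sub_self_mem_span_sub_one {g : MvPolynomial σ R} {N : ℕ}
    (hN : g.totalDegree ≤ N) : homogenize L N g - g ∈ Ideal.span {L - 1} := by
  conv => enter [2, 2]; rw [← sum_homogeneousComponent_of_totalDegree_lt (Nat.lt_succ_of_le hN)]
  rw [homogenize_apply, ← Finset.sum_sub_distrib]
  exact Ideal.sum_mem _ fun i _ => mul_pow_sub_self_mem_span_sub_one L _ _

theorem homogenize_mul_sub_one (hL : L.IsHomogeneous 1) {g : MvPolynomial σ R} {N : ℕ}
    (hN : g.totalDegree < N) : homogenize L N (g * (L - 1)) = 0 := by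
  rw [← sum_homogeneousComponent_of_totalDegree_lt hN, Finset.sum_mul, map_sum]
  refine Finset.sum_eq_zero fun i hi => ?_
  have hiN := Finset.mem_range.1 hi
  have hgi := homogeneousComponent_isHomogeneous i g
  rw [mul_sub, mul_one, map_sub, homogenize_of_isHomogeneous L (hgi.mul hL) hiN,
    homogenize_of_isHomogeneous L hgi hiN.le, mul_assoc, ← pow_succ',
    show N - (i + 1) + 1 = N - i by omega, sub_self]

theorem homogenize_mem {I : Ideal (MvPolynomial σ R)}
    (hI : I.IsHomogeneous (homogeneousSubmodule σ R)) {g : MvPolynomial σ R} (hg : g ∈ I)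
    (N : ℕ) : homogenize L N g ∈ I := by
  rw [homogenize_apply]
  exact Ideal.sum_mem _ fun i _ => I.mul_mem_right _ (homogeneousComponent_mem_of_mem hI hg i)

/-- The ideal `I + (L - 1)` cutting out the part of the projective scheme of `I` which lies in the
affine chart `L ≠ 0`, identified with the affine hyperplane `L = 1`. -/
def chartIdeal (I : Ideal (MvPolynomial σ R)) (L : MvPolynomial σ R) : Ideal (MvPolynomial σ R) :=
  I ⊔ Ideal.span {L - 1}

theorem mem_chartIdeal_iff_exists_mul_pow_mem {I : Ideal (MvPolynomial σ R)}
    (hI : I.IsHomogeneous (homogeneousSubmodule σ R)) (hL : L.IsHomogeneous 1)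
    {G : MvPolynomial σ R} {e : ℕ} (hG : G.IsHomogeneous e) :
    G ∈ chartIdeal I L ↔ ∃ n, G * L ^ n ∈ I := by
  constructor
  · intro h
    obtain ⟨x, hx, y, hy, hxy⟩ := Submodule.mem_sup.1 h
    obtain ⟨b, rfl⟩ := Ideal.mem_span_singleton'.1 hy
    refine ⟨b.totalDegree + 1, ?_⟩
    have key := congrArg (homogenize L (e + (b.totalDegree + 1))) hxy
    rw [map_add, homogenize_mul_sub_one hL (by omega), add_zero,
      homogenize_of_isHomogeneous L hG (Nat.le_add_right _ _), Nat.add_sub_cancel_left] at key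
    exact key ▸ homogenize_mem hI hx _
  · rintro ⟨n, hn⟩
    rw [← sub_sub_cancel (G * L ^ n) G]
    exact sub_mem (Ideal.mem_sup_left hn)
      (Ideal.mem_sup_right (mul_pow_sub_self_mem_span_sub_one L G n))

theorem exists_isHomogeneous_sub_mul_mem {I : Ideal (MvPolynomial σ R)}
    (hI : I.IsHomogeneous (homogeneousSubmodule σ R)) (hL : L.IsHomogeneous 1)
    {G : MvPolynomial σ R} {d : ℕ} (hG : G.IsHomogeneous (d + 1)) (hGI : G ∈ I ⊔ Ideal.span {L}) :
    ∃ c : MvPolynomial σ R, c.IsHomogeneous d ∧ G - c * L ∈ I := by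
  obtain ⟨x, hx, y, hy, hxy⟩ := Submodule.mem_sup.1 hGI
  obtain ⟨c, rfl⟩ := Ideal.mem_span_singleton'.1 hy
  refine ⟨homogeneousComponent d c, homogeneousComponent_isHomogeneous _ _, ?_⟩
  rw [← homogeneousComponent_mul_of_isHomogeneous hL, ← homogeneousComponent_eq_self hG, ← hxy,
    map_add, add_sub_cancel_right]
  exact homogeneousComponent_mem_of_mem hI hx _

/-- The restriction of forms of degree `d` to the affine scheme defined by `chartIdeal I L`. -/
def chartMap (I : Ideal (MvPolynomial σ R)) (L : MvPolynomial σ R) (d : ℕ) :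
    homogeneousSubmodule σ R d →ₗ[R] MvPolynomial σ R ⧸ chartIdeal I L :=
  (Ideal.Quotient.mkₐ R (chartIdeal I L)).toLinearMap ∘ₗ (homogeneousSubmodule σ R d).subtype

theorem chartMap_apply (I : Ideal (MvPolynomial σ R)) (L : MvPolynomial σ R) {d : ℕ}
    (x : homogeneousSubmodule σ R d) :
    chartMap I L d x = Ideal.Quotient.mk (chartIdeal I L) x :=
  rfl

theorem chartMap_surjective {I : Ideal (MvPolynomial σ R)}
    (hI : I.IsHomogeneous (homogeneousSubmodule σ R)) (hL : L.IsHomogeneous 1) {d : ℕ}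
    (hsurj : ∀ n ≥ d, ∀ G : MvPolynomial σ R, G.IsHomogeneous (n + 1) → G ∈ I ⊔ Ideal.span {L}) :
    Function.Surjective (chartMap I L d) := by
  have of_form (n : ℕ) : ∀ G : MvPolynomial σ R, G.IsHomogeneous (d + n) →
      ∃ x, chartMap I L d x = Ideal.Quotient.mk (chartIdeal I L) G := by
    induction n with
    | zero => exact fun G hG => ⟨⟨G, hG⟩, rfl⟩
    | succ n ih =>
      intro G hG
      obtain ⟨c, hc, hcG⟩ :=
        exists_isHomogeneous_sub_mul_mem hI hL hG (hsurj (d + n) (Nat.le_add_right _ _) G hG)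
      obtain ⟨x, hx⟩ := ih c hc
      refine ⟨x, hx.trans (Eq.symm (Ideal.Quotient.eq.2 ?_))⟩
      rw [← sub_add_sub_cancel G (c * L) c]
      refine add_mem (Ideal.mem_sup_left hcG) (Ideal.mem_sup_right ?_)
      simpa only [pow_one] using mul_pow_sub_self_mem_span_sub_one L c 1
  intro y
  obtain ⟨g, rfl⟩ := Ideal.Quotient.mk_surjective y
  obtain ⟨x, hx⟩ := of_form g.totalDegree _ (isHomogeneous_homogenize hL _ g)
  refine ⟨x, hx.trans (Ideal.Quotient.eq.2 (Ideal.mem_sup_right ?_))⟩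
  exact homogenize_sub_self_mem_span_sub_one (Nat.le_add_left _ _)

theorem ker_chartMap {I : Ideal (MvPolynomial σ R)}
    (hI : I.IsHomogeneous (homogeneousSubmodule σ R)) (hL : L.IsHomogeneous 1) {d : ℕ}
    (hinj : ∀ n ≥ d, ∀ G : MvPolynomial σ R, G.IsHomogeneous n → G * L ∈ I → G ∈ I) :
    LinearMap.ker (chartMap I L d) = gradedPart I d := by
  ext ⟨G, hG⟩
  rw [LinearMap.mem_ker, chartMap_apply, Ideal.Quotient.eq_zero_iff_mem, mem_gradedPart,
    mem_chartIdeal_iff_exists_mul_pow_mem hI hL hG]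
  refine ⟨fun ⟨n, hn⟩ => ?_, fun hGI => ⟨0, by simpa using hGI⟩⟩
  induction n with
  | zero => simpa using hn
  | succ n ih =>
    refine ih (hinj (d + n) (Nat.le_add_right _ _) _ ?_ ?_)
    · simpa using IsHomogeneous.mul hG (hL.pow n)
    · rwa [mul_assoc, ← pow_succ]

end Dehomogenization

section GeneralHyperplane

variable {σ k : Type*} [Finite σ] [Field k] {I : Ideal (MvPolynomial σ k)} {L : MvPolynomial σ k}

theorem mem_of_mul_mem_of_hilbertFunction_eq (hI : I.IsHomogeneous (homogeneousSubmodule σ k))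
    (hL : L.IsHomogeneous 1) {d : ℕ} (hd : hilbertFunction I d = hilbertFunction I (d + 1))
    (hsurj : ∀ G : MvPolynomial σ k, G.IsHomogeneous (d + 1) → G ∈ I ⊔ Ideal.span {L})
    {G : MvPolynomial σ k} (hG : G.IsHomogeneous d) (hGL : G * L ∈ I) : G ∈ I := by
  let mulL : (homogeneousSubmodule σ k d ⧸ gradedPart I d) →ₗ[k]
      homogeneousSubmodule σ k (d + 1) ⧸ gradedPart I (d + 1) :=
    (gradedPart I d).mapQ _ (mulForm hL rfl) fun _ hx => I.mul_mem_right L (mem_gradedPart.1 hx)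
  have mulL_surjective : Function.Surjective mulL := by
    intro y
    obtain ⟨⟨y, hy⟩, rfl⟩ := Submodule.Quotient.mk_surjective _ y
    obtain ⟨c, hc, hcy⟩ := exists_isHomogeneous_sub_mul_mem hI hL hy (hsurj y hy)
    exact ⟨Submodule.Quotient.mk ⟨c, hc⟩,
      ((Submodule.Quotient.eq (gradedPart I (d + 1))).2 hcy).symm⟩
  have mulL_injective : Function.Injective mulL :=
    (LinearMap.injective_iff_surjective_of_finrank_eq_finrank hd).2 mulL_surjective
  have hzero : mulL (Submodule.Quotient.mk ⟨G, hG⟩) = mulL 0 := by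
    rw [map_zero]
    exact (Submodule.Quotient.mk_eq_zero _).2 hGL
  exact (Submodule.Quotient.mk_eq_zero (gradedPart I d)).1 (mulL_injective hzero)

theorem finite_and_finrank_quotient_chartIdeal (hI : I.IsHomogeneous (homogeneousSubmodule σ k))
    (hL : L.IsHomogeneous 1) {d r : ℕ} (hr : ∀ n ≥ d, hilbertFunction I n = r)
    (hsurj : ∀ n ≥ d, ∀ G : MvPolynomial σ k, G.IsHomogeneous (n + 1) → G ∈ I ⊔ Ideal.span {L}) :
    Module.Finite k (MvPolynomial σ k ⧸ chartIdeal I L) ∧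
      Module.finrank k (MvPolynomial σ k ⧸ chartIdeal I L) = r := by
  have chartMap_surj := chartMap_surjective hI hL hsurj
  have hker : LinearMap.ker (chartMap I L d) = gradedPart I d :=
    ker_chartMap hI hL fun n hn G hG => mem_of_mul_mem_of_hilbertFunction_eq hI hL
      ((hr n hn).trans (hr (n + 1) (hn.trans n.le_succ)).symm) (hsurj n hn) hG
  refine ⟨Module.Finite.of_surjective _ chartMap_surj, ?_⟩
  rw [← (LinearMap.quotKerEquivOfSurjective _ chartMap_surj).finrank_eq, hker, ← hr d le_rfl,
    hilbertFunction]

end GeneralHyperplane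

section Nullstellensatz

variable {σ k : Type*} [Finite σ] [Field k] [IsAlgClosed k]

theorem exists_forall_isHomogeneous_mem_of_zeroLocus_subset {I : Ideal (MvPolynomial σ k)}
    (hI : zeroLocus k I ⊆ {0}) :
    ∃ d, ∀ n ≥ d, ∀ G : MvPolynomial σ k, G.IsHomogeneous n → G ∈ I := by
  have hrad : idealOfVars σ k ≤ I.radical := by
    rw [← vanishingIdeal_zeroLocus_eq_radical (K := k), idealOfVars, Ideal.span_le]
    rintro _ ⟨i, rfl⟩
    rw [SetLike.mem_coe, mem_vanishingIdeal_iff]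
    intro v hv
    rw [hI hv, aeval_X, Pi.zero_apply]
  obtain ⟨d, hd⟩ := Ideal.exists_pow_le_of_le_radical_of_fg hrad (idealOfVars_fg σ k)
  refine ⟨d, fun n hn G hG => hd ((mem_pow_idealOfVars_iff _ _).2 fun x hx => ?_)⟩
  rw [Finsupp.degree_apply, ← hG.degree_eq_sum_deg_support hx]
  exact hn

end Nullstellensatz

section Evaluation

variable {σ R : Type*} [CommSemiring R]

theorem ne_zero_of_eval_ne_zero {F : MvPolynomial σ R} {v : σ → R} (hv : eval v F ≠ 0) : F ≠ 0 :=
  fun hF => hv (hF ▸ map_zero _)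

theorem aeval_mul_of_isHomogeneous {A : Type*} [CommSemiring A] [Algebra R A]
    {F : MvPolynomial σ R} {m : ℕ} (hF : F.IsHomogeneous m) (c : A) (v : σ → A) :
    aeval (fun i => c * v i) F = c ^ m * aeval v F := by
  rw [aeval_def, aeval_def, eval₂_eq, eval₂_eq, Finset.mul_sum]
  refine Finset.sum_congr rfl fun d hd => ?_
  rw [hF.degree_eq_sum_deg_support hd]
  simp only [mul_pow, Finset.prod_mul_distrib, Finset.prod_pow_eq_pow_sum]
  ring

theorem eval_smul_of_isHomogeneous {F : MvPolynomial σ R} {m : ℕ} (hF : F.IsHomogeneous m) (c : R)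
    (v : σ → R) : eval (c • v) F = c ^ m * eval v F :=
  aeval_mul_of_isHomogeneous hF c v

end Evaluation

section Points

variable {σ k : Type*} [Field k]

theorem mem_zeroLocus_iff_eval {I : Ideal (MvPolynomial σ k)} {v : σ → k} :
    v ∈ zeroLocus k I ↔ ∀ F ∈ I, eval v F = 0 :=
  Iff.rfl

theorem mem_zeroLocus_span_pair {F₁ F₂ : MvPolynomial σ k} {v : σ → k} :
    v ∈ zeroLocus k (Ideal.span {F₁, F₂}) ↔ eval v F₁ = 0 ∧ eval v F₂ = 0 := by
  simp [zeroLocus_span, aeval_eq_eval]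

theorem mem_zeroLocus_sup_span_singleton {I : Ideal (MvPolynomial σ k)} {F : MvPolynomial σ k}
    {v : σ → k} : v ∈ zeroLocus k (I ⊔ Ideal.span {F}) ↔ v ∈ zeroLocus k I ∧ eval v F = 0 := by
  have hF : eval v F = 0 ↔ v ∈ zeroLocus k (Ideal.span {F}) := by
    simp [zeroLocus_span, aeval_eq_eval]
  rw [hF, zeroLocus_vanishingIdeal_galoisConnection.l_sup]
  exact Iff.rfl

theorem smul_mem_zeroLocus {I : Ideal (MvPolynomial σ k)}
    (hI : I.IsHomogeneous (homogeneousSubmodule σ k)) {v : σ → k} (hv : v ∈ zeroLocus k I) (c : k) :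
    c • v ∈ zeroLocus k I := by
  intro F hF
  change eval (c • v) F = 0
  rw [← sum_homogeneousComponent F, map_sum]
  refine Finset.sum_eq_zero fun i _ => ?_
  rw [eval_smul_of_isHomogeneous (homogeneousComponent_isHomogeneous i F),
    mem_zeroLocus_iff_eval.1 hv _ (homogeneousComponent_mem_of_mem hI hF i), mul_zero]

theorem exists_isHomogeneous_one_eval_eq [Finite σ] (f : Module.Dual k (σ → k)) :
    ∃ L : MvPolynomial σ k, L.IsHomogeneous 1 ∧ ∀ v, eval v L = f v := by
  classical
  have := Fintype.ofFinite σ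
  let M : Matrix Unit σ k := LinearMap.toMatrix' (LinearMap.pi fun _ => f)
  refine ⟨M.toMvPolynomial (), M.toMvPolynomial_isHomogeneous (), fun v => ?_⟩
  rw [Matrix.toMvPolynomial_eval_eq_apply, LinearMap.toMatrix'_mulVec, LinearMap.pi_apply]

theorem exists_isHomogeneous_one_eval_rep_ne_zero [Finite σ] [Infinite k]
    {s : Set (Projectivization k (σ → k))} (hs : s.Finite) :
    ∃ L : MvPolynomial σ k, L.IsHomogeneous 1 ∧ ∀ Q ∈ s, eval Q.rep L ≠ 0 := by
  have := hs.to_subtype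
  obtain ⟨f, hf⟩ := Module.exists_dual_forall_apply_ne_zero (K := k) (fun Q : s => Q.1.rep)
    fun Q => Q.1.rep_nonzero
  obtain ⟨L, hL, hLf⟩ := exists_isHomogeneous_one_eval_eq f
  exact ⟨L, hL, fun Q hQ => hLf _ ▸ hf ⟨Q, hQ⟩⟩

theorem exists_isHomogeneous_one_separating [Finite σ] {P Q : Projectivization k (σ → k)}
    (hPQ : P ≠ Q) :
    ∃ L : MvPolynomial σ k, L.IsHomogeneous 1 ∧ eval P.rep L = 0 ∧ eval Q.rep L ≠ 0 := by
  have hQP : Q.rep ∉ Submodule.span k {P.rep} := by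
    intro hmem
    refine hPQ ?_
    rw [← P.mk_rep, ← Q.mk_rep, eq_comm, Projectivization.mk_eq_mk_iff']
    exact Submodule.mem_span_singleton.1 hmem
  obtain ⟨f, hfQ, hfP⟩ := Submodule.exists_le_ker_of_notMem hQP
  obtain ⟨L, hL, hLf⟩ := exists_isHomogeneous_one_eval_eq f
  exact ⟨L, hL, (hLf _).trans (hfP (Submodule.mem_span_singleton_self _)), hLf Q.rep ▸ hfQ⟩

theorem exists_isHomogeneous_separating [Finite σ] {s : Finset (Projectivization k (σ → k))}
    {Q : Projectivization k (σ → k)} (hQ : Q ∉ s) {d : ℕ} (hd : s.card ≤ d) :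
    ∃ G : MvPolynomial σ k, G.IsHomogeneous d ∧ (∀ P ∈ s, eval P.rep G = 0) ∧ eval Q.rep G ≠ 0 := by
  have hsep (P : s) := exists_isHomogeneous_one_separating (ne_of_mem_of_not_mem P.2 hQ)
  choose L hL hLP hLQ using hsep
  obtain ⟨i, hi⟩ := Function.ne_iff.1 Q.rep_nonzero
  refine ⟨(∏ P, L P) * X i ^ (d - s.card), ?_, fun P hP => ?_, ?_⟩
  · have hprod := IsHomogeneous.prod Finset.univ L (fun _ => 1) fun P _ => hL P
    convert hprod.mul ((isHomogeneous_X k i).pow (d - s.card)) using 1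
    simp [hd]
  · rw [map_mul, map_prod, Finset.prod_eq_zero (Finset.mem_univ ⟨P, hP⟩) (hLP ⟨P, hP⟩), zero_mul]
  · rw [map_mul, map_prod, map_pow, eval_X]
    exact mul_ne_zero (Finset.prod_ne_zero_iff.2 fun P _ => hLQ P) (pow_ne_zero _ hi)

/-- The values of forms of degree `d` at chosen representatives of the points of `s`. -/
def evalAtPoints (s : Finset (Projectivization k (σ → k))) (d : ℕ) :
    homogeneousSubmodule σ k d →ₗ[k] s → k :=
  LinearMap.pi fun Q => (aeval Q.1.rep).toLinearMap ∘ₗ (homogeneousSubmodule σ k d).subtype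

theorem evalAtPoints_apply (s : Finset (Projectivization k (σ → k))) {d : ℕ}
    (x : homogeneousSubmodule σ k d) (Q : s) :
    evalAtPoints s d x Q = eval Q.1.rep (x : MvPolynomial σ k) :=
  rfl

theorem evalAtPoints_surjective [Finite σ] {s : Finset (Projectivization k (σ → k))} {d : ℕ}
    (hd : s.card ≤ d) : Function.Surjective (evalAtPoints s d) := by
  classical
  have hsep (Q : s) := exists_isHomogeneous_separating (Finset.notMem_erase Q.1 s)
    ((Finset.card_erase_le).trans hd)
  choose G hG hGP hGQ using hsep
  intro y
  refine ⟨∑ Q : s, (y Q / eval Q.1.rep (G Q)) • ⟨G Q, hG Q⟩, funext fun P => ?_⟩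
  rw [map_sum, Finset.sum_apply, Finset.sum_eq_single P]
  · rw [map_smul, Pi.smul_apply, evalAtPoints_apply, smul_eq_mul, div_mul_cancel₀ _ (hGQ P)]
  · intro Q _ hQP
    rw [map_smul, Pi.smul_apply, evalAtPoints_apply,
      hGP Q P (Finset.mem_erase.2 ⟨fun h => hQP (Subtype.ext h.symm), P.2⟩), smul_zero]
  · exact fun hP => absurd (Finset.mem_univ P) hP

theorem card_le_hilbertFunction [Finite σ] {I : Ideal (MvPolynomial σ k)}
    {s : Finset (Projectivization k (σ → k))} (hs : ∀ Q ∈ s, Q.rep ∈ zeroLocus k I) {d : ℕ}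
    (hd : s.card ≤ d) : s.card ≤ hilbertFunction I d := by
  have hker : gradedPart I d ≤ LinearMap.ker (evalAtPoints s d) := fun _ hx =>
    LinearMap.mem_ker.2 (funext fun Q => hs Q Q.2 _ (mem_gradedPart.1 hx))
  have hsurj : Function.Surjective ((gradedPart I d).liftQ _ hker) := fun y =>
    (evalAtPoints_surjective hd y).imp' Submodule.Quotient.mk fun _ hx => hx
  simpa [hilbertFunction] using LinearMap.finrank_le_finrank_of_surjective hsurj

theorem finite_setOf_rep_mem_zeroLocus [Finite σ] {I : Ideal (MvPolynomial σ k)} {r d : ℕ}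
    (hr : ∀ n ≥ d, hilbertFunction I n ≤ r) :
    {Q : Projectivization k (σ → k) | Q.rep ∈ zeroLocus k I}.Finite := by
  by_contra hinf
  obtain ⟨s, hs, hcard⟩ := Set.Infinite.exists_subset_card_eq hinf (r + 1)
  have := card_le_hilbertFunction hs (Nat.le_add_left s.card d)
  have := hr (d + s.card) (Nat.le_add_right _ _)
  omega

theorem rep_mk_mem_zeroLocus {I : Ideal (MvPolynomial σ k)}
    (hI : I.IsHomogeneous (homogeneousSubmodule σ k)) {v : σ → k} (hv0 : v ≠ 0)
    (hv : v ∈ zeroLocus k I) : (Projectivization.mk k v hv0).rep ∈ zeroLocus k I := by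
  obtain ⟨a, ha⟩ := Projectivization.exists_smul_eq_mk_rep k v hv0
  exact ha ▸ smul_mem_zeroLocus hI hv a

theorem eval_rep_mk_eq_zero {F : MvPolynomial σ k} {m : ℕ} (hF : F.IsHomogeneous m) {v : σ → k}
    (hv0 : v ≠ 0) (hv : eval v F = 0) : eval (Projectivization.mk k v hv0).rep F = 0 := by
  obtain ⟨a, ha⟩ := Projectivization.exists_smul_eq_mk_rep k v hv0
  rw [← ha, Units.smul_def, eval_smul_of_isHomogeneous hF, hv, mul_zero]

theorem finite_and_finrank_quotient_chartIdeal_of_eval_rep_ne_zero [Finite σ] [IsAlgClosed k]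
    {I : Ideal (MvPolynomial σ k)} (hI : I.IsHomogeneous (homogeneousSubmodule σ k))
    {L : MvPolynomial σ k} (hL : L.IsHomogeneous 1) {d r : ℕ}
    (hr : ∀ n ≥ d, hilbertFunction I n = r)
    (hLQ : ∀ Q : Projectivization k (σ → k), Q.rep ∈ zeroLocus k I → eval Q.rep L ≠ 0) :
    Module.Finite k (MvPolynomial σ k ⧸ chartIdeal I L) ∧
      Module.finrank k (MvPolynomial σ k ⧸ chartIdeal I L) = r := by
  have hzero : zeroLocus k (I ⊔ Ideal.span {L}) ⊆ {0} := by
    intro v hv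
    obtain ⟨hvI, hvL⟩ := mem_zeroLocus_sup_span_singleton.1 hv
    by_contra hv0
    exact hLQ _ (rep_mk_mem_zeroLocus hI hv0 hvI) (eval_rep_mk_eq_zero hL hv0 hvL)
  obtain ⟨e, he⟩ := exists_forall_isHomogeneous_mem_of_zeroLocus_subset hzero
  exact finite_and_finrank_quotient_chartIdeal (d := max d e) hI hL
    (fun n hn => hr n (le_of_max_le_left hn))
    fun n hn => he (n + 1) ((le_of_max_le_right hn).trans n.le_succ)

end Points

section Localization

variable {S B : Type*} [CommRing S] [CommRing B]

theorem exists_mul_mem_of_apply_mem_map {f : S →+* B} {J : Ideal S} {M : Submonoid S}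
    (hker : RingHom.ker f ≤ J) (hfrac : ∀ y, ∃ g, ∃ h ∈ M, y * f h = f g) {g : S}
    (hg : f g ∈ J.map f) : ∃ h ∈ M, h * g ∈ J := by
  have mem_frac : ∀ y ∈ J.map f, ∃ h ∈ M, ∃ j ∈ J, y * f h = f j := by
    intro y hy
    induction hy using Submodule.span_induction with
    | mem y hy =>
      obtain ⟨j, hj, rfl⟩ := hy
      exact ⟨1, M.one_mem, j, hj, by rw [map_one, mul_one]⟩
    | zero => exact ⟨1, M.one_mem, 0, J.zero_mem, by rw [zero_mul, map_zero]⟩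
    | add x y _ _ hx hy =>
      obtain ⟨h, hh, j, hj, hxj⟩ := hx
      obtain ⟨h', hh', j', hj', hyj⟩ := hy
      refine ⟨h * h', M.mul_mem hh hh', j * h' + j' * h,
        J.add_mem (J.mul_mem_right _ hj) (J.mul_mem_right _ hj'), ?_⟩
      simp only [map_add, map_mul, ← hxj, ← hyj]
      ring
    | smul a x _ hx =>
      obtain ⟨h, hh, j, hj, hxj⟩ := hx
      obtain ⟨a', h', hh', ha⟩ := hfrac a
      refine ⟨h * h', M.mul_mem hh hh', a' * j, J.mul_mem_left _ hj, ?_⟩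
      simp only [smul_eq_mul, map_mul, ← hxj, ← ha]
      ring
  obtain ⟨h, hh, j, hj, hgj⟩ := mem_frac _ hg
  refine ⟨h, hh, ?_⟩
  rw [← sub_add_cancel (h * g) j]
  refine add_mem (hker ?_) hj
  rw [RingHom.mem_ker, map_sub, map_mul, mul_comm, hgj, sub_self]

theorem nonempty_localization_algEquiv_quotient_map {k : Type*} [CommRing k] [Algebra k S]
    [Algebra k B] {f : S →ₐ[k] B} {J : Ideal S} (P : Ideal (S ⧸ J)) [P.IsPrime]
    (hker : RingHom.ker f ≤ J) (hunit : ∀ g, Ideal.Quotient.mk J g ∉ P → IsUnit (f g))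
    (hfrac : ∀ y, ∃ g h, Ideal.Quotient.mk J h ∉ P ∧ y * f h = f g) :
    Nonempty (Localization.AtPrime P ≃ₐ[k] B ⧸ J.map f) := by
  let φ : S ⧸ J →ₐ[k] B ⧸ J.map f := Ideal.quotientMapₐ (J.map f) f Ideal.le_comap_map
  have φ_mk (g : S) : φ (Ideal.Quotient.mk J g) = Ideal.Quotient.mk (J.map f) (f g) := rfl
  let _ := φ.toRingHom.toAlgebra
  have : IsScalarTower k (S ⧸ J) (B ⧸ J.map f) :=
    IsScalarTower.of_algebraMap_eq fun r => (φ.commutes r).symm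
  have : IsLocalization P.primeCompl (B ⧸ J.map f) := by
    refine ⟨⟨fun ⟨x, hx⟩ => ?_, fun y => ?_, fun {x y} hxy => ?_⟩⟩
    · obtain ⟨g, rfl⟩ := Ideal.Quotient.mk_surjective x
      exact (hunit g hx).map (Ideal.Quotient.mk (J.map f))
    · obtain ⟨y, rfl⟩ := Ideal.Quotient.mk_surjective y
      obtain ⟨g, h, hh, hy⟩ := hfrac y
      exact ⟨(Ideal.Quotient.mk J g, ⟨_, hh⟩), congrArg (Ideal.Quotient.mk (J.map f)) hy⟩
    · obtain ⟨g, hg⟩ := Ideal.Quotient.mk_surjective (x - y)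
      have hfg : f g ∈ J.map f := by
        rw [← Ideal.Quotient.eq_zero_iff_mem, ← φ_mk, hg, map_sub]
        exact sub_eq_zero.2 hxy
      obtain ⟨h, hh, hhg⟩ := exists_mul_mem_of_apply_mem_map (f := (f : S →+* B))
        (M := P.primeCompl.comap (Ideal.Quotient.mk J)) hker
        (fun y => (hfrac y).imp fun g ⟨h, hh, hy⟩ => ⟨h, hh, hy⟩) hfg
      refine ⟨⟨_, hh⟩, ?_⟩
      rw [← sub_eq_zero, ← mul_sub, ← hg, ← map_mul]
      exact Ideal.Quotient.eq_zero_iff_mem.2 hhg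
  exact ⟨(IsLocalization.algEquiv P.primeCompl _ _).restrictScalars k⟩

end Localization

section ChartPoint

variable {σ k : Type*} [Field k] {L : MvPolynomial σ k}

/-- The multiple of the vector `v` on the affine hyperplane `L = 1`, where `L` is a linear form
with `L(v) ≠ 0`. -/
def chartPoint (L : MvPolynomial σ k) (v : σ → k) : σ → k :=
  (eval v L)⁻¹ • v

theorem eval_chartPoint_self (hL : L.IsHomogeneous 1) {v : σ → k} (hv : eval v L ≠ 0) :
    eval (chartPoint L v) L = 1 := by
  rw [chartPoint, eval_smul_of_isHomogeneous hL, pow_one, inv_mul_cancel₀ hv]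

theorem eval_chartPoint_eq_zero_iff {v : σ → k} (hv : eval v L ≠ 0) {G : MvPolynomial σ k} {e : ℕ}
    (hG : G.IsHomogeneous e) : eval (chartPoint L v) G = 0 ↔ eval v G = 0 := by
  rw [chartPoint, eval_smul_of_isHomogeneous hG,
    mul_eq_zero_iff_left (pow_ne_zero e (inv_ne_zero hv))]

theorem chartPoint_smul (hL : L.IsHomogeneous 1) {c : k} (hc : c ≠ 0) {v : σ → k}
    (hv : eval v L = 1) : chartPoint L (c • v) = v := by
  rw [chartPoint, eval_smul_of_isHomogeneous hL, hv, pow_one, mul_one, inv_smul_smul₀ hc]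

theorem mem_zeroLocus_chartIdeal {I : Ideal (MvPolynomial σ k)} {v : σ → k} :
    v ∈ zeroLocus k (chartIdeal I L) ↔ v ∈ zeroLocus k I ∧ eval v L = 1 := by
  rw [chartIdeal, mem_zeroLocus_sup_span_singleton, map_sub, map_one, sub_eq_zero]

theorem chartPoint_rep_bijOn {I : Ideal (MvPolynomial σ k)}
    (hI : I.IsHomogeneous (homogeneousSubmodule σ k)) (hL : L.IsHomogeneous 1)
    (hLQ : ∀ Q : Projectivization k (σ → k), Q.rep ∈ zeroLocus k I → eval Q.rep L ≠ 0) :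
    Set.BijOn (fun Q : Projectivization k (σ → k) => chartPoint L Q.rep)
      {Q | Q.rep ∈ zeroLocus k I} (zeroLocus k (chartIdeal I L)) := by
  refine ⟨fun Q hQ => ?_, fun P hP Q _ hPQ => ?_, fun v hv => ?_⟩
  · exact mem_zeroLocus_chartIdeal.2
      ⟨smul_mem_zeroLocus hI hQ _, eval_chartPoint_self hL (hLQ Q hQ)⟩
  · rw [← P.mk_rep, ← Q.mk_rep, Projectivization.mk_eq_mk_iff']
    refine ⟨eval P.rep L * (eval Q.rep L)⁻¹, ?_⟩
    rw [mul_smul]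
    exact (congrArg _ hPQ.symm).trans (smul_inv_smul₀ (hLQ P hP) P.rep)
  · obtain ⟨hvI, hvL⟩ := mem_zeroLocus_chartIdeal.1 hv
    have hv0 : v ≠ 0 := by
      rintro rfl
      rw [← zero_smul k (0 : σ → k), eval_smul_of_isHomogeneous hL] at hvL
      simp at hvL
    obtain ⟨a, ha⟩ := Projectivization.exists_smul_eq_mk_rep k v hv0
    refine ⟨_, rep_mk_mem_zeroLocus hI hv0 hvI, ?_⟩
    change chartPoint L (Projectivization.mk k v hv0).rep = v
    rw [← ha, Units.smul_def, chartPoint_smul hL a.ne_zero hvL]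

end ChartPoint

section QuotientPoint

variable {σ k : Type*} [Field k] {J : Ideal (MvPolynomial σ k)}

/-- The prime ideal of the coordinate ring of the zero locus of `J` consisting of the functions
vanishing at the point `v`. -/
def quotientPoint (J : Ideal (MvPolynomial σ k)) (v : zeroLocus k J) :
    PrimeSpectrum (MvPolynomial σ k ⧸ J) :=
  ⟨RingHom.ker (Ideal.Quotient.lift J (eval v) v.2), RingHom.ker_isPrime _⟩

theorem mk_mem_quotientPoint {v : zeroLocus k J} {g : MvPolynomial σ k} :
    Ideal.Quotient.mk J g ∈ (quotientPoint J v).asIdeal ↔ eval v g = 0 :=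
  Iff.rfl

theorem quotientPoint_injective : Function.Injective (quotientPoint J) := by
  intro v w hvw
  ext i
  have hmem : Ideal.Quotient.mk J (X i - C (w.1 i)) ∈ (quotientPoint J v).asIdeal := by
    rw [hvw, mk_mem_quotientPoint, map_sub, eval_X, eval_C, sub_self]
  rwa [mk_mem_quotientPoint, map_sub, eval_X, eval_C, sub_eq_zero] at hmem

theorem quotientPoint_surjective [Finite σ] [IsAlgClosed k]
    [Module.Finite k (MvPolynomial σ k ⧸ J)] : Function.Surjective (quotientPoint J) := by
  intro P
  have : IsArtinianRing (MvPolynomial σ k ⧸ J) := IsArtinianRing.of_finite k _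
  have hmax := Ideal.comap_isMaximal_of_surjective (Ideal.Quotient.mk J)
    Ideal.Quotient.mk_surjective (K := P.asIdeal)
  obtain ⟨v, hv⟩ := (isMaximal_iff_eq_vanishingIdeal_singleton (K := k)).1 hmax
  have mem_iff (g : MvPolynomial σ k) : Ideal.Quotient.mk J g ∈ P.asIdeal ↔ eval v g = 0 := by
    rw [← Ideal.mem_comap, hv, mem_vanishingIdeal_singleton_iff, aeval_eq_eval]
  have hvJ : v ∈ zeroLocus k J := fun g hg => (mem_iff g).1 <| by
    rw [Ideal.Quotient.eq_zero_iff_mem.2 hg]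
    exact zero_mem _
  refine ⟨⟨v, hvJ⟩, PrimeSpectrum.ext (Ideal.ext fun x => ?_)⟩
  obtain ⟨g, rfl⟩ := Ideal.Quotient.mk_surjective x
  exact (mem_iff g).symm

end QuotientPoint

section DegreeZeroFractions

variable {σ k K : Type*} [Field k] [Field K] [Algebra k K] [Algebra (MvPolynomial σ k) K]
  [IsScalarTower k (MvPolynomial σ k) K] {L : MvPolynomial σ k}

variable (K) in
/-- The substitution `Xᵢ ↦ Xᵢ / L`, sending a form `G` of degree `e` to `G / L ^ e`, in a field `K`
containing the polynomial ring. -/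
def dehomogenize (L : MvPolynomial σ k) : MvPolynomial σ k →ₐ[k] K :=
  aeval fun i => (algebraMap (MvPolynomial σ k) K L)⁻¹ * algebraMap (MvPolynomial σ k) K (X i)

theorem dehomogenize_of_isHomogeneous (L : MvPolynomial σ k) {G : MvPolynomial σ k} {e : ℕ}
    (hG : G.IsHomogeneous e) :
    dehomogenize K L G = (algebraMap _ K L)⁻¹ ^ e * algebraMap _ K G := by
  have hinclusion := aeval_algebraMap_apply K (X : σ → MvPolynomial σ k) G
  rw [aeval_X_left_apply] at hinclusion
  rw [dehomogenize, aeval_mul_of_isHomogeneous hG]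
  exact congrArg _ hinclusion

variable [FaithfulSMul (MvPolynomial σ k) K]

theorem dehomogenize_mul_pow {G : MvPolynomial σ k} {e : ℕ} (hL0 : L ≠ 0)
    (hG : G.IsHomogeneous e) :
    dehomogenize K L G * algebraMap _ K (L ^ e) = algebraMap _ K G := by
  rw [dehomogenize_of_isHomogeneous L hG, map_pow, mul_right_comm, ← mul_pow,
    inv_mul_cancel₀ (mt (FaithfulSMul.algebraMap_eq_zero_iff _ K).1 hL0), one_pow, one_mul]

theorem ker_dehomogenize (hL : L.IsHomogeneous 1) (hL0 : L ≠ 0) :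
    RingHom.ker (dehomogenize K L) = Ideal.span {L - 1} := by
  have hLK : algebraMap _ K L ≠ 0 := mt (FaithfulSMul.algebraMap_eq_zero_iff _ K).1 hL0
  have hle : Ideal.span {L - 1} ≤ RingHom.ker (dehomogenize K L) := by
    rw [Ideal.span_singleton_le_iff_mem, RingHom.mem_ker, map_sub, map_one,
      dehomogenize_of_isHomogeneous L hL, pow_one, inv_mul_cancel₀ hLK, sub_self]
  refine le_antisymm (fun g hg => ?_) hle
  have hsub := homogenize_sub_self_mem_span_sub_one (L := L) (le_refl g.totalDegree)
  have hzero := add_mem (hle hsub) hg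
  rw [sub_add_cancel, RingHom.mem_ker] at hzero
  have hform : homogenize L g.totalDegree g = 0 := by
    apply FaithfulSMul.algebraMap_injective _ K
    rw [← dehomogenize_mul_pow hL0 (isHomogeneous_homogenize hL _ g), hzero, zero_mul, map_zero]
  rwa [hform, zero_sub, neg_mem_iff] at hsub

end DegreeZeroFractions

section LocalRing

instance : IsScalarTower ℂ (MvPolynomial (Fin 3) ℂ) K3 :=
  inferInstanceAs (IsScalarTower ℂ (MvPolynomial (Fin 3) ℂ)
    (FractionRing (MvPolynomial (Fin 3) ℂ)))

instance : IsFractionRing (MvPolynomial (Fin 3) ℂ) K3 :=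
  inferInstanceAs (IsFractionRing (MvPolynomial (Fin 3) ℂ)
    (FractionRing (MvPolynomial (Fin 3) ℂ)))

variable {v : Fin 3 → ℂ} {F₁ F₂ L : MvPolynomial (Fin 3) ℂ} {m₁ m₂ : ℕ}

theorem mem_projLocalRing_iff {x : K3} :
    x ∈ projLocalRing v ↔ ∃ (G H : MvPolynomial (Fin 3) ℂ) (e : ℕ), G.IsHomogeneous e ∧
      H.IsHomogeneous e ∧ eval v H ≠ 0 ∧ x * algebraMap _ K3 H = algebraMap _ K3 G := by
  refine ⟨fun hx => ?_, fun hx => Algebra.subset_adjoin hx⟩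
  rw [projLocalRing] at hx
  induction hx using Algebra.adjoin_induction with
  | mem _ hx => exact hx
  | algebraMap r =>
    refine ⟨C r, 1, 0, isHomogeneous_C _ _, isHomogeneous_one _ _, by simp, ?_⟩
    rw [map_one, mul_one, ← algebraMap_eq, ← IsScalarTower.algebraMap_apply]
  | add x y _ _ hx hy =>
    obtain ⟨G, H, e, hG, hH, hv, h⟩ := hx
    obtain ⟨G', H', e', hG', hH', hv', h'⟩ := hy
    refine ⟨G * H' + H * G', H * H', e + e', (hG.mul hH').add (hH.mul hG'), hH.mul hH',
      map_mul (eval v) H H' ▸ mul_ne_zero hv hv', ?_⟩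
    simp only [map_mul, map_add, ← h, ← h']
    ring
  | mul x y _ _ hx hy =>
    obtain ⟨G, H, e, hG, hH, hv, h⟩ := hx
    obtain ⟨G', H', e', hG', hH', hv', h'⟩ := hy
    refine ⟨G * G', H * H', e + e', hG.mul hG', hH.mul hH',
      map_mul (eval v) H H' ▸ mul_ne_zero hv hv', ?_⟩
    simp only [map_mul, ← h, ← h']
    ring

theorem div_mem_projLocalRing {G H : MvPolynomial (Fin 3) ℂ} {e : ℕ} (hG : G.IsHomogeneous e)
    (hH : H.IsHomogeneous e) (hHv : eval v H ≠ 0) :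
    algebraMap _ K3 G / algebraMap _ K3 H ∈ projLocalRing v :=
  Algebra.subset_adjoin ⟨G, H, e, hG, hH, hHv, div_mul_cancel₀ _
    (mt (FaithfulSMul.algebraMap_eq_zero_iff _ K3).1 (ne_zero_of_eval_ne_zero hHv))⟩

theorem dehomogenize_mem_projLocalRing (hL : L.IsHomogeneous 1) (hLv : eval v L ≠ 0)
    (g : MvPolynomial (Fin 3) ℂ) : dehomogenize K3 L g ∈ projLocalRing v := by
  rw [← sum_homogeneousComponent g, map_sum]
  refine sum_mem fun i _ => Algebra.subset_adjoin ⟨homogeneousComponent i g, L ^ i, i,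
    homogeneousComponent_isHomogeneous i g, by simpa using hL.pow i, ?_, ?_⟩
  · exact map_pow (eval v) L i ▸ pow_ne_zero i hLv
  · exact dehomogenize_mul_pow (ne_zero_of_eval_ne_zero hLv)
      (homogeneousComponent_isHomogeneous i g)

/-- The substitution `Xᵢ ↦ Xᵢ / L` with values in the local ring at a point `v` of the affine chart
`L ≠ 0`. It induces the map from the coordinate ring of the chart to the local ring. -/
def localDehomogenize (hL : L.IsHomogeneous 1) (hLv : eval v L ≠ 0) :
    MvPolynomial (Fin 3) ℂ →ₐ[ℂ] projLocalRing v :=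
  (dehomogenize K3 L).codRestrict _ (dehomogenize_mem_projLocalRing hL hLv)

theorem coe_localDehomogenize (hL : L.IsHomogeneous 1) (hLv : eval v L ≠ 0)
    (g : MvPolynomial (Fin 3) ℂ) : (localDehomogenize hL hLv g : K3) = dehomogenize K3 L g :=
  rfl

theorem ker_localDehomogenize (hL : L.IsHomogeneous 1) (hLv : eval v L ≠ 0) :
    RingHom.ker (localDehomogenize hL hLv) = Ideal.span {L - 1} := by
  rw [← ker_dehomogenize (K := K3) hL (ne_zero_of_eval_ne_zero hLv)]
  ext g
  exact Subtype.ext_iff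

theorem isUnit_localDehomogenize_of_isHomogeneous (hL : L.IsHomogeneous 1) (hLv : eval v L ≠ 0)
    {G : MvPolynomial (Fin 3) ℂ} {e : ℕ} (hG : G.IsHomogeneous e) (hGv : eval v G ≠ 0) :
    IsUnit (localDehomogenize hL hLv G) := by
  have hLe : (L ^ e).IsHomogeneous e := by simpa using hL.pow e
  refine IsUnit.of_mul_eq_one ⟨_, div_mem_projLocalRing hLe hG hGv⟩ (Subtype.ext ?_)
  change dehomogenize K3 L G * (algebraMap _ K3 (L ^ e) / algebraMap _ K3 G) = 1
  rw [← mul_div_assoc, dehomogenize_mul_pow (ne_zero_of_eval_ne_zero hLv) hG]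
  exact div_self (mt (FaithfulSMul.algebraMap_eq_zero_iff _ K3).1 (ne_zero_of_eval_ne_zero hGv))

theorem isUnit_localDehomogenize (hL : L.IsHomogeneous 1) (hLv : eval v L ≠ 0)
    {g : MvPolynomial (Fin 3) ℂ} (hg : eval (chartPoint L v) g ≠ 0) :
    IsUnit (localDehomogenize hL hLv g) := by
  have hform := isHomogeneous_homogenize hL g.totalDegree g
  have hsub := homogenize_sub_self_mem_span_sub_one (L := L) (le_refl g.totalDegree)
  have hlocal : localDehomogenize hL hLv (homogenize L g.totalDegree g) =
      localDehomogenize hL hLv g := by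
    rwa [← sub_eq_zero, ← map_sub, ← RingHom.mem_ker, ker_localDehomogenize]
  have heval : eval (chartPoint L v) (homogenize L g.totalDegree g) = eval (chartPoint L v) g := by
    obtain ⟨c, hc⟩ := Ideal.mem_span_singleton'.1 hsub
    rw [← sub_eq_zero, ← map_sub, ← hc, map_mul, map_sub, map_one, eval_chartPoint_self hL hLv,
      sub_self, mul_zero]
  rw [← hlocal]
  refine isUnit_localDehomogenize_of_isHomogeneous hL hLv hform ?_
  rwa [← heval, ne_eq, eval_chartPoint_eq_zero_iff hLv hform] at hg

theorem exists_mul_localDehomogenize_eq (hL : L.IsHomogeneous 1) (hLv : eval v L ≠ 0)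
    (y : projLocalRing v) : ∃ (G H : MvPolynomial (Fin 3) ℂ) (e : ℕ), H.IsHomogeneous e ∧
      eval v H ≠ 0 ∧ (y : K3) * algebraMap _ K3 H = algebraMap _ K3 G ∧
      y * localDehomogenize hL hLv H = localDehomogenize hL hLv G := by
  obtain ⟨G, H, e, hG, hH, hHv, h⟩ := mem_projLocalRing_iff.1 y.2
  refine ⟨G, H, e, hH, hHv, h, Subtype.ext ?_⟩
  rw [Subalgebra.coe_mul, coe_localDehomogenize, coe_localDehomogenize,
    dehomogenize_of_isHomogeneous L hG, dehomogenize_of_isHomogeneous L hH, ← h, mul_left_comm]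

theorem mul_localDehomogenize_eq (hL : L.IsHomogeneous 1) (hLv : eval v L ≠ 0)
    {F H : MvPolynomial (Fin 3) ℂ} {y : projLocalRing v}
    (h : (y : K3) * algebraMap _ K3 H = algebraMap _ K3 F) :
    y * localDehomogenize hL hLv H = localDehomogenize hL hLv F := by
  obtain ⟨G', H', e, hH', hHv', h', hy⟩ := exists_mul_localDehomogenize_eq hL hLv y
  have hcross : G' * H = F * H' := by
    apply FaithfulSMul.algebraMap_injective _ K3
    rw [map_mul, map_mul, ← h, ← h', mul_right_comm]
  refine (isUnit_localDehomogenize_of_isHomogeneous hL hLv hH' hHv').mul_right_cancel ?_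
  rw [mul_right_comm, hy, ← map_mul, hcross, map_mul]

theorem interIdeal_eq_span (h₁ : F₁.IsHomogeneous m₁) (h₂ : F₂.IsHomogeneous m₂)
    (hL : L.IsHomogeneous 1) (hLv : eval v L ≠ 0) :
    interIdeal F₁ F₂ v = Ideal.span {localDehomogenize hL hLv F₁, localDehomogenize hL hLv F₂} := by
  have isUnit_den {H : MvPolynomial (Fin 3) ℂ} {e : ℕ} (hH : H.IsHomogeneous e)
      (hHv : eval v H ≠ 0) := isUnit_localDehomogenize_of_isHomogeneous hL hLv hH hHv
  have eval_pow_ne_zero (m : ℕ) : eval v (L ^ m) ≠ 0 := map_pow (eval v) L m ▸ pow_ne_zero m hLv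
  have hL0 := ne_zero_of_eval_ne_zero hLv
  refine le_antisymm (Ideal.span_le.2 ?_) (Ideal.span_le.2 ?_)
  · rintro y ⟨H, e, hH, hHv, h | h⟩ <;>
      refine (Ideal.mul_unit_mem_iff_mem _ (isUnit_den hH hHv)).1 ?_ <;>
      rw [mul_localDehomogenize_eq hL hLv h]
    · exact Ideal.subset_span (Set.mem_insert _ _)
    · exact Ideal.subset_span (Set.mem_insert_of_mem _ rfl)
  · rintro _ (rfl | rfl)
    · exact Ideal.subset_span
        ⟨L ^ m₁, _, hL.pow m₁, eval_pow_ne_zero m₁, Or.inl (dehomogenize_mul_pow hL0 h₁)⟩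
    · exact Ideal.subset_span
        ⟨L ^ m₂, _, hL.pow m₂, eval_pow_ne_zero m₂, Or.inr (dehomogenize_mul_pow hL0 h₂)⟩

theorem map_localDehomogenize_chartIdeal (h₁ : F₁.IsHomogeneous m₁) (h₂ : F₂.IsHomogeneous m₂)
    (hL : L.IsHomogeneous 1) (hLv : eval v L ≠ 0) :
    (chartIdeal (Ideal.span {F₁, F₂}) L).map (localDehomogenize hL hLv) = interIdeal F₁ F₂ v := by
  have hker : (Ideal.span {L - 1}).map (localDehomogenize hL hLv) = ⊥ := by
    rw [Ideal.map_eq_bot_iff_le_ker, ker_localDehomogenize]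
  rw [chartIdeal, Ideal.map_sup, hker, sup_bot_eq, Ideal.map_span, Set.image_pair,
    interIdeal_eq_span h₁ h₂ hL hLv]

theorem finrank_localization_eq_interMult (h₁ : F₁.IsHomogeneous m₁) (h₂ : F₂.IsHomogeneous m₂)
    (hL : L.IsHomogeneous 1) (hLv : eval v L ≠ 0)
    (P : Ideal (MvPolynomial (Fin 3) ℂ ⧸ chartIdeal (Ideal.span {F₁, F₂}) L)) [P.IsPrime]
    (hP : ∀ g, Ideal.Quotient.mk _ g ∈ P ↔ eval (chartPoint L v) g = 0) :
    Module.finrank ℂ (Localization.AtPrime P) = interMult F₁ F₂ v := by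
  have hker : RingHom.ker (localDehomogenize hL hLv) ≤ chartIdeal (Ideal.span {F₁, F₂}) L :=
    (ker_localDehomogenize hL hLv).trans_le le_sup_right
  obtain ⟨φ⟩ := nonempty_localization_algEquiv_quotient_map P hker
    (fun g hg => isUnit_localDehomogenize hL hLv (mt (hP g).2 hg)) fun y => by
      obtain ⟨G, H, e, hH, hHv, -, hy⟩ := exists_mul_localDehomogenize_eq hL hLv y
      exact ⟨G, H, fun hHP => hHv ((eval_chartPoint_eq_zero_iff hLv hH).1 ((hP H).1 hHP)), hy⟩
  rw [φ.toLinearEquiv.finrank_eq, map_localDehomogenize_chartIdeal h₁ h₂ hL hLv, interMult]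

theorem sum_interMult_eq_finrank (h₁ : F₁.IsHomogeneous m₁) (h₂ : F₂.IsHomogeneous m₂)
    (hL : L.IsHomogeneous 1) {s : Finset (Projectivization ℂ (Fin 3 → ℂ))}
    (hs : ∀ Q, Q ∈ s ↔ Q.rep ∈ zeroLocus ℂ (Ideal.span {F₁, F₂}))
    (hLs : ∀ Q ∈ s, eval Q.rep L ≠ 0)
    [Module.Finite ℂ (MvPolynomial (Fin 3) ℂ ⧸ chartIdeal (Ideal.span {F₁, F₂}) L)] :
    ∑ Q ∈ s, interMult F₁ F₂ Q.rep =
      Module.finrank ℂ (MvPolynomial (Fin 3) ℂ ⧸ chartIdeal (Ideal.span {F₁, F₂}) L) := by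
  have : IsArtinianRing (MvPolynomial (Fin 3) ℂ ⧸ chartIdeal (Ideal.span {F₁, F₂}) L) :=
    IsArtinianRing.of_finite ℂ _
  have := Fintype.ofFinite
    (PrimeSpectrum (MvPolynomial (Fin 3) ℂ ⧸ chartIdeal (Ideal.span {F₁, F₂}) L))
  obtain ⟨chart_mapsTo, chart_injOn, chart_surjOn⟩ := chartPoint_rep_bijOn
    (isHomogeneous_span_pair h₁ h₂) hL fun Q hQ => hLs Q ((hs Q).2 hQ)
  refine Eq.trans ?_ (IsArtinianRing.finrank_eq_sum_primeSpectrum _ ℂ).symm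
  refine Finset.sum_bij (fun Q hQ => quotientPoint _ ⟨_, chart_mapsTo ((hs Q).1 hQ)⟩)
    (fun _ _ => Finset.mem_univ _) (fun P hP Q hQ hPQ => ?_) (fun p _ => ?_) fun Q hQ => ?_
  · exact chart_injOn ((hs P).1 hP) ((hs Q).1 hQ)
      (congrArg Subtype.val (quotientPoint_injective hPQ))
  · obtain ⟨⟨w, hw⟩, rfl⟩ := quotientPoint_surjective p
    obtain ⟨Q, hQ, rfl⟩ := chart_surjOn hw
    exact ⟨Q, (hs Q).2 hQ, rfl⟩
  · exact (finrank_localization_eq_interMult h₁ h₂ hL (hLs Q hQ) _ fun _ => Iff.rfl).symm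

end LocalRing

end Bezout

/-- Bézout's theorem: two projective plane curves of degrees `m₁, m₂` defined by coprime
homogeneous polynomials meet in finitely many points, and the sum of the local intersection
multiplicities over the intersection points equals `m₁·m₂`. -/
theorem stmt_19 (m₁ m₂ : ℕ) (F₁ F₂ : MvPolynomial (Fin 3) ℂ)
    (h₁ : F₁.IsHomogeneous m₁) (h₂ : F₂.IsHomogeneous m₂)
    (hF₁ : F₁ ≠ 0) (hF₂ : F₂ ≠ 0) (hcop : IsRelPrime F₁ F₂) :
    ∃ hfin : {Q : Projectivization ℂ (Fin 3 → ℂ) |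
        eval Q.rep F₁ = 0 ∧ eval Q.rep F₂ = 0}.Finite,
      ∑ Q ∈ hfin.toFinset, interMult F₁ F₂ Q.rep = m₁ * m₂ := by
  have hilbert (n : ℕ) (hn : n ≥ m₁ + m₂) :
      Bezout.hilbertFunction (Ideal.span {F₁, F₂}) n = m₁ * m₂ :=
    Bezout.hilbertFunction_span_pair h₁ h₂ hF₂ hcop hn
  have hzero (Q : Projectivization ℂ (Fin 3 → ℂ)) :
      Q.rep ∈ zeroLocus ℂ (Ideal.span {F₁, F₂}) ↔ eval Q.rep F₁ = 0 ∧ eval Q.rep F₂ = 0 :=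
    Bezout.mem_zeroLocus_span_pair
  have hfin : {Q : Projectivization ℂ (Fin 3 → ℂ) |
      eval Q.rep F₁ = 0 ∧ eval Q.rep F₂ = 0}.Finite := by
    simpa only [hzero] using Bezout.finite_setOf_rep_mem_zeroLocus fun n hn => (hilbert n hn).le
  obtain ⟨L, hL, hLQ⟩ := Bezout.exists_isHomogeneous_one_eval_rep_ne_zero hfin
  obtain ⟨_, hfinrank⟩ := Bezout.finite_and_finrank_quotient_chartIdeal_of_eval_rep_ne_zero
    (Bezout.isHomogeneous_span_pair h₁ h₂) hL hilbert fun Q hQ => hLQ Q ((hzero Q).1 hQ)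
  refine ⟨hfin, ?_⟩
  rw [← hfinrank]
  exact Bezout.sum_interMult_eq_finrank h₁ h₂ hL
    (fun Q => (hfin.mem_toFinset).trans (hzero Q).symm)
    fun Q hQ => hLQ Q (hfin.mem_toFinset.1 hQ)

end
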